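/- Let q be an odd prime power and let r be an integer with 0 ≤ r ≤ (q−5)/2. Then there exists a set without tangents S in PG(2,q) of size q(q−1)/2 − r(q+1)/2. (Explicitly: if C is an irreducible conic, Q an exterior point of C, and R a set of r external lines of C through Q, then the set of interior points of C not lying on any line of R is such a set.) -/

import Mathlib

/-!
`PG(2,F)`: points are the 1-dimensional subspaces of `F^3` (modelled as the
projectivization of `Fin 3 → F`), lines are the 2-dimensional subspaces.
-/

variable {F : Type*} [Field F]

/-- The points of `PG(2,F)`: 1-dimensional subspaces of `F^3`. -/
abbrev PGPoint (F : Type*) [Field F] := Projectivization F (Fin 3 → F)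

/-- A line of `PG(2,F)` is a 2-dimensional subspace of `F^3`. -/
def IsProjLine (F : Type*) [Field F] (L : Submodule F (Fin 3 → F)) : Prop :=
  Module.finrank F L = 2

/-- The set of projective points lying on the subspace `L`. -/
def pointsOn (L : Submodule F (Fin 3 → F)) : Set (PGPoint F) :=
  {P | P.submodule ≤ L}

/-- `S` is a set without tangents: no line of `PG(2,F)` meets `S` in exactly one point. -/
def NoTangents (S : Set (PGPoint F)) : Prop :=
  ∀ L : Submodule F (Fin 3 → F), IsProjLine F L →
    ¬ (∃! P : PGPoint F, P ∈ S ∩ pointsOn L)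

/-!
In coordinates `(1 : y : z)`, the conic is the parabola `z = y ^ 2`; it touches the line at
infinity, so all its interior points are affine, and `(1 : y : z)` is interior exactly when
`y ^ 2 - z` is not a square. The exterior point is `Q = (0 : 1 : 0)`, and the external lines
through `Q` are the lines `z = m` with `m` a nonsquare.

Along an affine line, `y ^ 2 - z` restricts to a polynomial `a * t ^ 2 + b * t + c` with `a` a
square and, if the line has an interior point, with nonzero discriminant. Its quadratic character
then sums to `-1` or `0`, and it has at most two roots, so the line has at least `(q - 2) / 2`
interior points. If one of them is off the `r` removed lines, then each removed line meets the given
line at most once, and `2 * r + 5 ≤ q` leaves a second interior point. On the line `z = m`, with `m`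
a nonsquare, the sum is `-1` and there are no roots, which gives exactly `(q + 1) / 2` interior
points.
-/

open Finset

section QuadraticChar

variable [Fintype F] [DecidableEq F]

theorem two_mul_card_filter_not_isSquare {α : Type*} (s : Finset α) (f : α → F) :
    2 * (#{x ∈ s | ¬IsSquare (f x)} : ℤ)
      = #s - ∑ x ∈ s, quadraticChar F (f x) - #{x ∈ s | f x = 0} := by
  have h_indicator (a : F) : 2 * (if ¬IsSquare a then (1 : ℤ) else 0)
      = 1 - quadraticChar F a - if a = 0 then 1 else 0 := by
    by_cases ha : a = 0
    · simp [ha]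
    · rcases quadraticChar_dichotomy ha with h | h <;>
        simp [h, ha, ← quadraticChar_neg_one_iff_not_isSquare]
  simp only [card_filter, Nat.cast_sum, Nat.cast_ite, Nat.cast_one, Nat.cast_zero, mul_sum,
    h_indicator, sum_sub_distrib, sum_const, nsmul_eq_mul, mul_one]

theorem two_mul_card_not_isSquare (hF : ringChar F ≠ 2) :
    2 * (#{a : F | ¬IsSquare a} : ℤ) = Fintype.card F - 1 := by
  rw [two_mul_card_filter_not_isSquare univ fun a : F => a, quadraticChar_sum_zero hF]
  simp [filter_eq']

theorem sum_comp_sq {A : Type*} [AddCommGroup A] (hF : ringChar F ≠ 2) (f : F → A) :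
    ∑ x, f (x ^ 2) = ∑ a, (quadraticChar F a + 1) • f a := by
  rw [← sum_fiberwise univ (· ^ 2)]
  refine sum_congr rfl fun a _ => ?_
  rw [sum_congr rfl fun x hx => congrArg f (mem_filter.mp hx).2, sum_const, ← natCast_zsmul,
    ← quadraticChar_card_sqrts hF]
  congr 3
  ext x
  simp

theorem sum_quadraticChar_sq_sub (hF : ringChar F ≠ 2) {m : F} (hm : m ≠ 0) :
    ∑ x, quadraticChar F (x ^ 2 - m) = -1 := by
  have h_jacobi : jacobiSum (quadraticChar F) (quadraticChar F) = -quadraticChar F (-1) := by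
    simpa only [(quadraticChar_isQuadratic F).inv] using
      jacobiSum_nontrivial_inv (quadraticChar_ne_one hF)
  have h_scale (x : F) : quadraticChar F (m * x) * quadraticChar F (m * x - m)
      = quadraticChar F (-1) * (quadraticChar F x * quadraticChar F (1 - x)) := by
    rw [← map_mul, ← map_mul, ← map_mul,
      show m * x * (m * x - m) = m ^ 2 * (-1 * (x * (1 - x))) by ring, map_mul _ (m ^ 2),
      quadraticChar_sq_one' hm, one_mul]
  calc ∑ x, quadraticChar F (x ^ 2 - m)
      = ∑ a, quadraticChar F a * quadraticChar F (a - m) + ∑ a, quadraticChar F (a - m) := by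
        simp only [sum_comp_sq hF fun a => quadraticChar F (a - m), smul_eq_mul, add_one_mul,
          sum_add_distrib]
    _ = ∑ x, quadraticChar F (m * x) * quadraticChar F (m * x - m) + 0 := by
        congr 1
        · exact (Equiv.sum_comp (Equiv.mulLeft₀ m hm) _).symm
        · exact (Equiv.sum_comp (Equiv.subRight m) _).trans (quadraticChar_sum_zero hF)
    _ = quadraticChar F (-1) * jacobiSum (quadraticChar F) (quadraticChar F) := by
        simp only [h_scale, ← mul_sum, jacobiSum, add_zero]
    _ = -1 := by
        rw [h_jacobi, mul_neg, ← sq, quadraticChar_sq_one (neg_ne_zero.mpr one_ne_zero)]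

theorem sum_quadraticChar_quadratic (hF : ringChar F ≠ 2) {a b c : F} (h : discrim a b c ≠ 0) :
    ∑ x, quadraticChar F (a * x ^ 2 + b * x + c) = -quadraticChar F a := by
  rcases eq_or_ne a 0 with rfl | ha
  · have hb : b ≠ 0 := by rintro rfl; simp [discrim] at h
    simpa using (((Equiv.mulLeft₀ b hb).trans (Equiv.addRight c)).sum_comp _).trans
      (quadraticChar_sum_zero hF)
  have h2 : (2 : F) ≠ 0 := Ring.two_ne_zero hF
  have h_square (x : F) : quadraticChar F a * quadraticChar F (a * x ^ 2 + b * x + c)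
      = quadraticChar F ((2 * a * x + b) ^ 2 - discrim a b c) := by
    rw [← map_mul, ← one_mul (quadraticChar F _), ← quadraticChar_sq_one' h2, ← map_mul, discrim]
    ring_nf
  have h_sum : quadraticChar F a * ∑ x, quadraticChar F (a * x ^ 2 + b * x + c) = -1 := by
    simp only [mul_sum, h_square]
    exact (((Equiv.mulLeft₀ (2 * a) (mul_ne_zero h2 ha)).trans (Equiv.addRight b)).sum_comp
      fun s => quadraticChar F (s ^ 2 - discrim a b c)).trans (sum_quadraticChar_sq_sub hF h)
  linear_combination quadraticChar F a * h_sum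
    - (∑ x, quadraticChar F (a * x ^ 2 + b * x + c)) * quadraticChar_sq_one ha

open Polynomial in
theorem card_filter_quadratic_eq_zero_le_two {a b c : F} (h : discrim a b c ≠ 0) :
    #{x : F | a * x ^ 2 + b * x + c = 0} ≤ 2 := by
  have h_ne : C a * X ^ 2 + C b * X + C c ≠ 0 := fun h0 => h <| by
    have ha : a = 0 := by simpa using congrArg (coeff · 2) h0
    have hb : b = 0 := by simpa using congrArg (coeff · 1) h0
    simp [discrim, ha, hb]
  have h_roots : ({x : F | a * x ^ 2 + b * x + c = 0} : Finset F).val ⊆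
      (C a * X ^ 2 + C b * X + C c).roots :=
    fun x hx => (mem_roots h_ne).mpr (by simpa using hx)
  exact (card_le_degree_of_subset_roots h_roots).trans natDegree_quadratic_le

theorem card_le_two_mul_card_not_isSquare_quadratic (hF : ringChar F ≠ 2) {a b c : F}
    (ha : IsSquare a) (h : discrim a b c ≠ 0) :
    Fintype.card F ≤ 2 * #{x : F | ¬IsSquare (a * x ^ 2 + b * x + c)} + 2 := by
  have h_card := two_mul_card_filter_not_isSquare univ fun x => a * x ^ 2 + b * x + c
  have h_roots := card_filter_quadratic_eq_zero_le_two h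
  have h_char : 0 ≤ quadraticChar F a := by
    obtain ⟨s, rfl⟩ := ha
    simpa only [map_mul] using mul_self_nonneg _
  rw [sum_quadraticChar_quadratic hF h, card_univ] at h_card
  omega

end QuadraticChar

theorem discrim_ne_zero_of_not_isSquare (h2 : (2 : F) ≠ 0) {a b c : F} (ha : IsSquare a)
    (hc : ¬IsSquare c) (hab : a ≠ 0 ∨ b ≠ 0) : discrim a b c ≠ 0 := by
  obtain ⟨s, rfl⟩ := ha
  intro h
  have h_sq : b ^ 2 = 4 * (s * s) * c := sub_eq_zero.mp h
  rcases eq_or_ne s 0 with rfl | hs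
  · simp_all
  · refine hc ⟨b / (2 * s), ?_⟩
    field_simp
    linear_combination -h_sq

section Parabola

variable [Fintype F] [DecidableEq F]

variable (F) in
/-- The interior points `(1 : y : z)` of the conic `z = y ^ 2`, as pairs `(y, z)`. The tangent at
`(t, t ^ 2)` is `z = 2 * t * y - t ^ 2` and passes through `(y, z)` iff
`(t - y) ^ 2 = y ^ 2 - z`. -/
def parabolaInterior : Finset (F × F) := {p | ¬IsSquare (p.1 ^ 2 - p.2)}

theorem mem_parabolaInterior {p : F × F} :
    p ∈ parabolaInterior F ↔ ¬IsSquare (p.1 ^ 2 - p.2) := by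
  simp [parabolaInterior]

theorem two_mul_card_parabolaInterior (hF : ringChar F ≠ 2) :
    2 * #(parabolaInterior F) = Fintype.card F * (Fintype.card F - 1) := by
  have h_row (y : F) : #{z : F | ¬IsSquare (y ^ 2 - z)} = #{a : F | ¬IsSquare a} :=
    card_equiv (Equiv.subLeft (y ^ 2)) (by simp)
  have h_card : #(parabolaInterior F) = Fintype.card F * #{a : F | ¬IsSquare a} := by
    simp only [parabolaInterior, card_filter, Fintype.sum_prod_type] at h_row ⊢
    simp only [h_row, sum_const, card_univ, smul_eq_mul]
  have h_half := two_mul_card_not_isSquare hF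
  rw [h_card, mul_left_comm]
  congr 1
  omega

theorem two_mul_card_parabolaInterior_filter_snd_eq (hF : ringChar F ≠ 2) {m : F}
    (hm : ¬IsSquare m) :
    2 * #{p ∈ parabolaInterior F | p.2 = m} = Fintype.card F + 1 := by
  have h_line : ({p ∈ parabolaInterior F | p.2 = m} : Finset (F × F))
      = image (·, m) {y | ¬IsSquare (y ^ 2 - m)} := by
    ext ⟨y, z⟩
    simp only [mem_filter, mem_parabolaInterior, mem_image, mem_univ, true_and, Prod.mk.injEq]
    grind
  have h_roots : #{y : F | y ^ 2 - m = 0} = 0 := by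
    rw [card_eq_zero, filter_eq_empty_iff]
    rintro y - hy
    exact hm (sub_eq_zero.mp hy ▸ IsSquare.sq y)
  have h_card := two_mul_card_filter_not_isSquare univ fun y : F => y ^ 2 - m
  rw [sum_quadraticChar_sq_sub hF (by rintro rfl; simp at hm), h_roots, card_univ] at h_card
  rw [h_line, card_image_of_injective _ (Prod.mk_left_injective m)]
  omega

theorem two_mul_card_parabolaInterior_filter_snd_notMem (hF : ringChar F ≠ 2) {M : Finset F}
    (hM : ∀ m ∈ M, ¬IsSquare m) :
    2 * #{p ∈ parabolaInterior F | p.2 ∉ M} + #M * (Fintype.card F + 1)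
      = Fintype.card F * (Fintype.card F - 1) := by
  have h_on : 2 * #{p ∈ parabolaInterior F | p.2 ∈ M} = #M * (Fintype.card F + 1) := by
    rw [← sum_card_fiberwise_eq_card_filter, mul_sum,
      sum_congr rfl fun m hm => two_mul_card_parabolaInterior_filter_snd_eq hF (hM m hm),
      sum_const, smul_eq_mul]
  rw [← two_mul_card_parabolaInterior hF, ← h_on, ← mul_add, add_comm,
    card_filter_add_card_filter_not]

theorem card_le_two_mul_card_add_smul_mem_parabolaInterior (hF : ringChar F ≠ 2) {p d : F × F}
    (hp : p ∈ parabolaInterior F) (hd : d ≠ 0) :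
    Fintype.card F ≤ 2 * #{t : F | p + t • d ∈ parabolaInterior F} + 2 := by
  have h2 : (2 : F) ≠ 0 := Ring.two_ne_zero hF
  have h_restrict (t : F) : (p + t • d).1 ^ 2 - (p + t • d).2
      = d.1 ^ 2 * t ^ 2 + (2 * p.1 * d.1 - d.2) * t + (p.1 ^ 2 - p.2) := by
    simp only [Prod.fst_add, Prod.snd_add, Prod.smul_fst, Prod.smul_snd, smul_eq_mul]
    ring
  have h_coeff : d.1 ^ 2 ≠ 0 ∨ 2 * p.1 * d.1 - d.2 ≠ 0 := by
    by_contra! h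
    have h_fst : d.1 = 0 := (pow_eq_zero_iff two_ne_zero).mp h.1
    exact hd (Prod.ext h_fst (by simpa [h_fst] using h.2))
  simp only [mem_parabolaInterior, h_restrict] at hp ⊢
  exact card_le_two_mul_card_not_isSquare_quadratic hF (IsSquare.sq _)
    (discrim_ne_zero_of_not_isSquare h2 (IsSquare.sq _) hp h_coeff)

theorem card_filter_add_mul_mem_le (M : Finset F) {z v : F} (hz : z ∉ M) :
    #{t : F | z + t * v ∈ M} ≤ #M := by
  rcases eq_or_ne v 0 with rfl | hv
  · simp [hz]
  · refine card_le_card_of_injOn (fun t => z + t * v) (by simp [Set.MapsTo]) ?_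
    exact ((add_right_injective z).comp (mul_left_injective₀ hv)).injOn

theorem exists_ne_zero_add_smul_mem_parabolaInterior (hF : ringChar F ≠ 2) {M : Finset F}
    (hM : 2 * #M + 5 ≤ Fintype.card F) {p d : F × F} (hp : p ∈ parabolaInterior F)
    (hpM : p.2 ∉ M) (hd : d ≠ 0) :
    ∃ t : F, t ≠ 0 ∧ p + t • d ∈ parabolaInterior F ∧ (p + t • d).2 ∉ M := by
  have h_interior := card_le_two_mul_card_add_smul_mem_parabolaInterior hF hp hd
  have h_removed := card_filter_add_mul_mem_le M (v := d.2) hpM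
  have h_sdiff := le_card_sdiff {t : F | p.2 + t * d.2 ∈ M} {t : F | p + t • d ∈ parabolaInterior F}
  obtain ⟨t, ht, ht0⟩ := exists_mem_ne (lt_of_lt_of_le (by omega) h_sdiff) (0 : F)
  exact ⟨t, ht0, by simpa using ht⟩

end Parabola

section AffinePoint

/-- The point `(1 : y : z)` of the projective plane, for `p = (y, z)` in the affine plane. -/
def affinePoint (p : F × F) : PGPoint F :=
  Projectivization.mk F ![1, p.1, p.2] fun h => one_ne_zero (congrFun h 0)

theorem affinePoint_injective : Function.Injective (affinePoint (F := F)) := by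
  intro p p' h
  obtain ⟨a, ha⟩ := (Projectivization.mk_eq_mk_iff' F _ _ _ _).mp h
  obtain rfl : a = 1 := by simpa using congrFun ha 0
  exact Prod.ext (by simpa using (congrFun ha 1).symm) (by simpa using (congrFun ha 2).symm)

theorem affinePoint_mem_pointsOn {L : Submodule F (Fin 3 → F)} {p : F × F} :
    affinePoint p ∈ pointsOn L ↔ ![1, p.1, p.2] ∈ L := by
  simp [pointsOn, affinePoint, Projectivization.submodule_mk, Submodule.span_singleton_le_iff_mem]

theorem IsProjLine.exists_mem_ne_zero_apply_zero {L : Submodule F (Fin 3 → F)}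
    (hL : IsProjLine F L) : ∃ w ∈ L, w ≠ 0 ∧ w 0 = 0 := by
  have h_ker : LinearMap.ker ((LinearMap.proj 0).domRestrict L : L →ₗ[F] F) ≠ ⊥ :=
    LinearMap.ker_ne_bot_of_finrank_lt (by rw [Module.finrank_self, hL]; exact one_lt_two)
  obtain ⟨⟨w, hwL⟩, hw, hw0⟩ := (Submodule.ne_bot_iff _).mp h_ker
  exact ⟨w, hwL, by simpa using hw0, by simpa using hw⟩

theorem IsProjLine.exists_direction {L : Submodule F (Fin 3 → F)} (hL : IsProjLine F L)
    {p : F × F} (hp : affinePoint p ∈ pointsOn L) :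
    ∃ d : F × F, d ≠ 0 ∧ ∀ t : F, affinePoint (p + t • d) ∈ pointsOn L := by
  obtain ⟨w, hwL, hw, hw0⟩ := hL.exists_mem_ne_zero_apply_zero
  refine ⟨(w 1, w 2), fun hd => hw ?_, fun t => affinePoint_mem_pointsOn.mpr ?_⟩
  · obtain ⟨h1, h2⟩ := Prod.mk_eq_zero.mp hd
    ext i
    fin_cases i <;> assumption
  · convert L.add_mem (affinePoint_mem_pointsOn.mp hp) (L.smul_mem t hwL) using 1
    ext i
    fin_cases i <;> simp [hw0]

theorem noTangents_image_affinePoint {T : Set (F × F)}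
    (hT : ∀ p ∈ T, ∀ d : F × F, d ≠ 0 → ∃ t : F, t ≠ 0 ∧ p + t • d ∈ T) :
    NoTangents (affinePoint '' T) := by
  rintro L hL ⟨_, ⟨⟨p, hp, rfl⟩, hpL⟩, h_unique⟩
  obtain ⟨d, hd, h_line⟩ := hL.exists_direction hpL
  obtain ⟨t, ht, htT⟩ := hT p hp d hd
  have h_eq : p + t • d = p :=
    affinePoint_injective (h_unique _ ⟨Set.mem_image_of_mem _ htT, h_line t⟩)
  exact smul_ne_zero ht hd (add_eq_left.mp h_eq)

end AffinePoint

/-- for odd `q` and `0 ≤ r ≤ (q-5)/2`, there exists a set without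
tangents in `PG(2,q)` of size `q(q-1)/2 - r(q+1)/2`. -/
theorem stmt_10 [Fintype F] (q r : ℕ) (hq : Fintype.card F = q) (hodd : Odd q)
    (hr : 2 * r + 5 ≤ q) :
    ∃ S : Set (PGPoint F), NoTangents S ∧
      S.ncard = q * (q - 1) / 2 - r * (q + 1) / 2 := by
  classical
  have hF : ringChar F ≠ 2 := fun h =>
    (Nat.not_even_iff_odd.mpr hodd) (hq ▸ Nat.even_iff.mpr (FiniteField.even_card_of_char_two h))
  have h_nonsquares := two_mul_card_not_isSquare hF
  obtain ⟨M, hM, hMr⟩ :=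
    exists_subset_card_eq (s := ({a : F | ¬IsSquare a} : Finset F)) (n := r) (by omega)
  refine ⟨affinePoint '' ({p ∈ parabolaInterior F | p.2 ∉ M} : Finset (F × F)),
    noTangents_image_affinePoint fun p hp d hd => ?_, ?_⟩
  · obtain ⟨hpI, hpM⟩ := mem_filter.mp hp
    obtain ⟨t, ht, htT⟩ := exists_ne_zero_add_smul_mem_parabolaInterior hF
      (by omega : 2 * #M + 5 ≤ Fintype.card F) hpI hpM hd
    exact ⟨t, ht, mem_filter.mpr htT⟩
  · have h_card := two_mul_card_parabolaInterior_filter_snd_notMem hF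
      fun m hm => (mem_filter.mp (hM hm)).2
    rw [hMr, hq] at h_card
    rw [Set.ncard_image_of_injective _ affinePoint_injective, Set.ncard_coe_finset]
    omega
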